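/- Let B_n(x) be the Bell polynomials and fix x > 0. For each n ≥ 1 let w_n = LW₀(n/x). Then B_n(x) is asymptotically equal to exp(n/w_n + n·ln(n/w_n) − (x + n))·(w_n + 1)^{−1/2} as n → ∞; that is, B_n(x)·exp(x + n − n/w_n)·(w_n/n)^n·√(w_n + 1) → 1 as n → ∞. -/

import Mathlib

/-- The Bell polynomials, defined by `B₀ = 1` and `B_{n+1} = X * (Bₙ' + Bₙ)`. -/
noncomputable def Bell : ℕ → Polynomial ℝ
  | 0 => 1
  | n + 1 => Polynomial.X * (Polynomial.derivative (Bell n) + Bell n)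

/-- The principal branch of the Lambert W function on the nonnegative reals:
for `z ≥ 0`, `LW0 z` is the unique `w ≥ 0` with `w·exp w = z`. -/
noncomputable def LW0 (z : ℝ) : ℝ :=
  Function.invFunOn (fun w => w * Real.exp w) (Set.Ici 0) z

section BellSaddlePoint

open Filter Topology MeasureTheory Set

theorem LW0_nonneg_and_mul_exp {z : ℝ} (hz : 0 ≤ z) :
    0 ≤ LW0 z ∧ LW0 z * Real.exp (LW0 z) = z := by
  have hcont : ContinuousOn (fun w : ℝ => w * Real.exp w) (Icc 0 z) := by fun_prop
  have hmem : z ∈ Icc ((0 : ℝ) * Real.exp 0) (z * Real.exp z) :=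
    ⟨by simpa using hz, le_mul_of_one_le_right hz (Real.one_le_exp hz)⟩
  obtain ⟨w, hw, hwz⟩ := intermediate_value_Icc hz hcont hmem
  have hex : ∃ w ∈ Ici (0 : ℝ), (fun w => w * Real.exp w) w = z := ⟨w, hw.1, hwz⟩
  exact ⟨Function.invFunOn_mem hex, Function.invFunOn_eq hex⟩

theorem tendsto_LW0_atTop : Tendsto LW0 atTop atTop := by
  refine tendsto_atTop.2 fun M => ?_
  filter_upwards [eventually_gt_atTop (|M| * Real.exp |M|)] with z hz
  obtain ⟨h0, h⟩ := LW0_nonneg_and_mul_exp ((by positivity : 0 ≤ |M| * Real.exp |M|).trans hz.le)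
  by_contra! hlt
  have hle : LW0 z ≤ |M| := hlt.le.trans (le_abs_self M)
  have : LW0 z * Real.exp (LW0 z) ≤ |M| * Real.exp |M| := by gcongr
  linarith

theorem iteratedDeriv_exp_exp_sub_one (x : ℝ) (n : ℕ) :
    iteratedDeriv n (fun z : ℂ => Complex.exp (x * (Complex.exp z - 1))) = fun z =>
      (Bell n).aeval (x * Complex.exp z) * Complex.exp (x * (Complex.exp z - 1)) := by
  induction n with
  | zero => simp [Bell]
  | succ n ih =>
    rw [iteratedDeriv_succ, ih]
    ext z
    have h1 : HasDerivAt (fun z : ℂ => (x : ℂ) * Complex.exp z) (x * Complex.exp z) z :=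
      (Complex.hasDerivAt_exp z).const_mul _
    have h2 : HasDerivAt (fun z : ℂ => Complex.exp (x * (Complex.exp z - 1)))
        (Complex.exp (x * (Complex.exp z - 1)) * (x * Complex.exp z)) z :=
      (((Complex.hasDerivAt_exp z).sub_const 1).const_mul (x : ℂ)).cexp
    have h3 := (((Bell n).hasDerivAt_aeval (x * Complex.exp z)).comp z h1).mul h2
    refine h3.deriv.trans ?_
    simp only [Bell, map_mul, map_add, Polynomial.aeval_X, Function.comp_apply]
    ring

/-- The integrand of Cauchy's formula on the circle of radius `w`, normalised at the saddle point;
`a` stands for `x * exp w`. -/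
noncomputable def saddleIntegrand (a w θ : ℝ) : ℂ :=
  Complex.exp (a * (Complex.exp (w * (Complex.exp (θ * Complex.I) - 1)) - 1)
    - a * w * θ * Complex.I)

theorem continuous_saddleIntegrand (a w : ℝ) : Continuous (saddleIntegrand a w) := by
  unfold saddleIntegrand
  fun_prop

theorem Bell_eval_eq_integral {x w : ℝ} (hw : 0 < w) {n : ℕ}
    (hn : x * Real.exp w * w = n) :
    (Bell n).eval x = n.factorial / (2 * Real.pi * w ^ n) * Real.exp (x * Real.exp w - x) *
      (∫ θ in -Real.pi..Real.pi, saddleIntegrand (x * Real.exp w) w θ).re := by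
  have hdiff : Differentiable ℂ (fun z : ℂ => Complex.exp (x * (Complex.exp z - 1))) := by fun_prop
  have hc := (hdiff.differentiableOn
    (s := Metric.closedBall 0 w)).circleIntegral_one_div_sub_center_pow_smul hw n
  rw [iteratedDeriv_exp_exp_sub_one] at hc
  simp only [Complex.exp_zero, sub_self, mul_zero, mul_one, sub_zero, circleIntegral,
    deriv_circleMap, smul_eq_mul] at hc
  have hB : Polynomial.aeval (x : ℂ) (Bell n) = ((Bell n).eval x : ℝ) := by
    rw [Polynomial.aeval_def, ← Complex.coe_algebraMap, Polynomial.eval₂_at_apply]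
  have hw' : (w : ℂ) ≠ 0 := by exact_mod_cast hw.ne'
  have hnC : (x : ℂ) * Complex.exp w * w = n := by exact_mod_cast hn
  have hint : ∀ θ : ℝ, circleMap 0 w θ * Complex.I * (1 / circleMap 0 w θ ^ (n + 1) *
      Complex.exp (x * (Complex.exp (circleMap 0 w θ) - 1))) =
      Complex.I * (Complex.exp (x * Complex.exp w - x) / w ^ n) *
        saddleIntegrand (x * Real.exp w) w θ := by
    intro θ
    have he : circleMap 0 w θ = w * Complex.exp (θ * Complex.I) := by simp [circleMap]
    have h1 : Complex.exp (x * (Complex.exp (w * Complex.exp (θ * Complex.I)) - 1)) =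
        Complex.exp (x * Complex.exp w - x) * saddleIntegrand (x * Real.exp w) w θ *
          Complex.exp (θ * Complex.I) ^ n := by
      rw [saddleIntegrand, ← Complex.exp_nat_mul, ← Complex.exp_add, ← Complex.exp_add]
      congr 1
      have : Complex.exp (w * (Complex.exp (θ * Complex.I) - 1)) =
          Complex.exp (w * Complex.exp (θ * Complex.I)) / Complex.exp w := by
        rw [← Complex.exp_sub]; ring_nf
      rw [this, ← hnC]
      push_cast
      field_simp
      ring
    rw [he, h1]
    have h2 := Complex.exp_ne_zero (θ * Complex.I)
    field_simp
    ring
  simp_rw [hint] at hc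
  rw [intervalIntegral.integral_const_mul] at hc
  have hper : Function.Periodic (saddleIntegrand (x * Real.exp w) w) (2 * Real.pi) := by
    intro θ
    unfold saddleIntegrand
    have h1 : Complex.exp (((θ + 2 * Real.pi : ℝ) : ℂ) * Complex.I) =
        Complex.exp (θ * Complex.I) := by
      push_cast
      rw [add_mul]
      exact Complex.exp_periodic _
    have hnC' : ((x * Real.exp w : ℝ) : ℂ) * w = n := by exact_mod_cast hn
    rw [h1, hnC', Complex.exp_eq_exp_iff_exists_int]
    refine ⟨-n, ?_⟩
    push_cast
    ring
  have hshift := hper.intervalIntegral_add_eq 0 (-Real.pi)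
  rw [show -Real.pi + 2 * Real.pi = Real.pi by ring, zero_add] at hshift
  rw [hshift, hB] at hc
  have hfac : (n.factorial : ℂ) ≠ 0 := by exact_mod_cast n.factorial_ne_zero
  have hpi : (Real.pi : ℂ) ≠ 0 := by exact_mod_cast Real.pi_ne_zero
  have key : (((Bell n).eval x : ℝ) : ℂ) =
      ((n.factorial / (2 * Real.pi * w ^ n) * Real.exp (x * Real.exp w - x) : ℝ) : ℂ) *
      ∫ θ in -Real.pi..Real.pi, saddleIntegrand (x * Real.exp w) w θ := by
    push_cast
    field_simp at hc ⊢
    linear_combination -hc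
  rw [← Complex.re_ofReal_mul, ← key, Complex.ofReal_re]

theorem Complex.norm_exp_sub_quadratic_le {z : ℂ} (hz : ‖z‖ ≤ 1) :
    ‖Complex.exp z - (1 + z + z ^ 2 / 2)‖ ≤ ‖z‖ ^ 3 := by
  have h := Complex.exp_bound hz (n := 3) (by norm_num)
  simp only [Finset.sum_range_succ, Finset.sum_range_zero, Nat.factorial] at h
  norm_num at h
  have h3 : 0 ≤ ‖z‖ ^ 3 := by positivity
  linarith

theorem norm_saddle_exponent_add_le {a w θ : ℝ} (ha : 0 ≤ a) (hw : 1 ≤ w) (hθ : w * |θ| ≤ 1) :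
    ‖(a * (Complex.exp (w * (Complex.exp (θ * Complex.I) - 1)) - 1) - a * w * θ * Complex.I)
      - ((-(a * w * (w + 1) * θ ^ 2 / 2) : ℝ) : ℂ)‖ ≤ 3 * a * (w * |θ|) ^ 3 := by
  have hθ0 := abs_nonneg θ
  have hθ1 : |θ| ≤ 1 := by nlinarith
  have hw0 : 0 ≤ w := by linarith
  set u : ℂ := θ * Complex.I with hu
  have hun : ‖u‖ = |θ| := by simp [hu]
  have hu2 : u ^ 2 = -(θ : ℂ) ^ 2 := by rw [hu, mul_pow, Complex.I_sq]; ring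
  have he1 : ‖Complex.exp u - 1‖ ≤ |θ| := by
    have := Real.norm_exp_I_mul_ofReal_sub_one_le (x := θ)
    rwa [mul_comm, Real.norm_eq_abs] at this
  have he2 : ‖Complex.exp u - 1 - u‖ ≤ |θ| ^ 2 := by
    rw [← hun]; exact Complex.norm_exp_sub_one_sub_id_le (by rwa [hun])
  have he3 : ‖Complex.exp u - (1 + u + u ^ 2 / 2)‖ ≤ |θ| ^ 3 := by
    rw [← hun]; exact Complex.norm_exp_sub_quadratic_le (by rwa [hun])
  set s : ℂ := w * (Complex.exp u - 1) with hs
  have hsn : ‖s‖ ≤ w * |θ| := by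
    rw [hs, norm_mul, Complex.norm_real, Real.norm_of_nonneg hw0]
    gcongr
  have he4 : ‖Complex.exp s - (1 + s + s ^ 2 / 2)‖ ≤ (w * |θ|) ^ 3 :=
    (Complex.norm_exp_sub_quadratic_le (hsn.trans hθ)).trans (by gcongr)
  have he5 : ‖Complex.exp u - 1 + u‖ ≤ 2 * |θ| := by
    refine (norm_add_le _ _).trans ?_
    rw [hun]; linarith
  have heq : (a * (Complex.exp s - 1) - a * w * θ * Complex.I)
      - ((-(a * w * (w + 1) * θ ^ 2 / 2) : ℝ) : ℂ) =
      a * ((Complex.exp s - (1 + s + s ^ 2 / 2)) + w * (Complex.exp u - (1 + u + u ^ 2 / 2))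
        + w ^ 2 / 2 * ((Complex.exp u - 1 - u) * (Complex.exp u - 1 + u))) := by
    push_cast
    rw [hs]
    linear_combination (a * w * (w + 1) / 2 : ℂ) * hu2 + (a * w : ℂ) * hu
  rw [heq, norm_mul, Complex.norm_real, Real.norm_of_nonneg ha, mul_comm 3 a, mul_assoc]
  gcongr
  have n2 : ‖(w : ℂ) * (Complex.exp u - (1 + u + u ^ 2 / 2))‖ ≤ w * |θ| ^ 3 := by
    rw [norm_mul, Complex.norm_real, Real.norm_of_nonneg hw0]
    gcongr
  have n3 : ‖(w : ℂ) ^ 2 / 2 * ((Complex.exp u - 1 - u) * (Complex.exp u - 1 + u))‖ ≤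
      w ^ 2 / 2 * (|θ| ^ 2 * (2 * |θ|)) := by
    rw [norm_mul, norm_mul, norm_div, norm_pow, Complex.norm_real, Real.norm_of_nonneg hw0]
    simp only [Complex.norm_ofNat]
    gcongr
  have h1 : w ≤ w ^ 3 := le_self_pow₀ hw (by norm_num)
  have h2 : w ^ 2 ≤ w ^ 3 := pow_le_pow_right₀ hw (by norm_num)
  have h3 : 0 ≤ |θ| ^ 3 := by positivity
  calc _ ≤ (w * |θ|) ^ 3 + w * |θ| ^ 3 + w ^ 2 / 2 * (|θ| ^ 2 * (2 * |θ|)) :=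
        (norm_add₃_le).trans (by gcongr)
    _ = (w ^ 3 + w + w ^ 2) * |θ| ^ 3 := by ring
    _ ≤ (w ^ 3 + w ^ 3 + w ^ 3) * |θ| ^ 3 := by gcongr
    _ = 3 * (w * |θ|) ^ 3 := by ring

theorem norm_saddleIntegrand (a w θ : ℝ) : ‖saddleIntegrand a w θ‖ =
    Real.exp (-(a * (1 - Real.exp (-(w * (1 - Real.cos θ))) * Real.cos (w * Real.sin θ)))) := by
  rw [saddleIntegrand, Complex.norm_exp]
  congr 1
  have h : (w : ℂ) * (Complex.exp (θ * Complex.I) - 1) =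
      ((-(w * (1 - Real.cos θ)) : ℝ) : ℂ) + ((w * Real.sin θ : ℝ) : ℂ) * Complex.I := by
    rw [Complex.exp_mul_I]; push_cast; ring
  have h2 : ((a : ℂ) * w * θ * Complex.I).re = 0 := by
    rw [← Complex.ofReal_mul, ← Complex.ofReal_mul, Complex.re_ofReal_mul, Complex.I_re, mul_zero]
  rw [Complex.sub_re, h2, Complex.re_ofReal_mul, Complex.sub_re, h, Complex.exp_add,
    ← Complex.ofReal_exp, Complex.re_ofReal_mul, Complex.exp_ofReal_mul_I_re, Complex.one_re]
  ring

theorem norm_saddleIntegrand_le_of_near {a w θ : ℝ} (ha : 0 ≤ a) (hw : 1 ≤ w) (hθ : w * |θ| ≤ 1) :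
    ‖saddleIntegrand a w θ‖ ≤ Real.exp (-(4 / Real.pi ^ 4) * (a * w * (w + 1) * θ ^ 2)) := by
  have hpi := Real.pi_gt_three
  have hθ0 := abs_nonneg θ
  have hθ1 : |θ| ≤ 1 := by nlinarith
  have hw0 : 0 ≤ w := by linarith
  have hy : |w * Real.sin θ| ≤ 1 := by
    rw [abs_mul, abs_of_nonneg hw0]
    exact (mul_le_mul_of_nonneg_left Real.abs_sin_le_abs hw0).trans hθ
  have hcos0 : 0 ≤ Real.cos (w * Real.sin θ) := Real.cos_nonneg_of_mem_Icc
    ⟨by linarith [neg_le_of_abs_le hy], by linarith [le_of_abs_le hy]⟩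
  have hcos := Real.cos_le_one_sub_mul_cos_sq (x := w * Real.sin θ) (by linarith)
  have hsin := Real.mul_abs_le_abs_sin (x := θ) (by linarith)
  have hsin2 : (2 / Real.pi) ^ 2 * θ ^ 2 ≤ Real.sin θ ^ 2 := by
    rw [← sq_abs θ, ← sq_abs (Real.sin θ), ← mul_pow]
    gcongr
  have hexp : Real.exp (-(w * (1 - Real.cos θ))) ≤ 1 := by
    rw [Real.exp_le_one_iff]
    nlinarith [Real.cos_le_one θ]
  rw [norm_saddleIntegrand]
  rw [neg_mul]
  refine Real.exp_le_exp.2 (neg_le_neg ?_)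
  have h1 : 2 / Real.pi ^ 2 * (w ^ 2 * ((2 / Real.pi) ^ 2 * θ ^ 2)) ≤
      1 - Real.exp (-(w * (1 - Real.cos θ))) * Real.cos (w * Real.sin θ) := by
    have : 2 / Real.pi ^ 2 * (w ^ 2 * ((2 / Real.pi) ^ 2 * θ ^ 2)) ≤
        2 / Real.pi ^ 2 * (w * Real.sin θ) ^ 2 := by
      rw [mul_pow w]; gcongr
    nlinarith
  calc 4 / Real.pi ^ 4 * (a * w * (w + 1) * θ ^ 2)
      ≤ 4 / Real.pi ^ 4 * (a * w * (w + w) * θ ^ 2) := by gcongr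
    _ = a * (2 / Real.pi ^ 2 * (w ^ 2 * ((2 / Real.pi) ^ 2 * θ ^ 2))) := by ring
    _ ≤ _ := mul_le_mul_of_nonneg_left h1 ha

theorem norm_saddleIntegrand_le_of_far {a w θ : ℝ} (ha : 0 ≤ a) (hw : 1 ≤ w) (hθ : 1 / w ≤ |θ|)
    (hθpi : |θ| ≤ Real.pi) :
    ‖saddleIntegrand a w θ‖ ≤ Real.exp (-(a / (Real.pi ^ 2 * w))) := by
  have hpi := Real.pi_gt_three
  have hw0 : 0 < w := by linarith
  have hcos := Real.cos_le_one_sub_mul_cos_sq hθpi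
  have hu : 2 / (Real.pi ^ 2 * w) ≤ w * (1 - Real.cos θ) := by
    calc 2 / (Real.pi ^ 2 * w) = w * (2 / Real.pi ^ 2 * (1 / w) ^ 2) := by field_simp
      _ ≤ w * (2 / Real.pi ^ 2 * |θ| ^ 2) := by gcongr
      _ ≤ _ := by rw [sq_abs]; gcongr; linarith
  set v := 2 / (Real.pi ^ 2 * w) with hv
  have hv0 : 0 < v := by positivity
  have hv1 : v ≤ 1 := by
    rw [hv, div_le_one (by positivity)]
    nlinarith
  have hexp : Real.exp (-(w * (1 - Real.cos θ))) ≤ 1 - v / 2 := by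
    calc Real.exp (-(w * (1 - Real.cos θ))) ≤ Real.exp (-v) := by gcongr
      _ ≤ 1 / (1 + v) := by
        rw [Real.exp_neg, ← one_div]
        gcongr
        linarith [Real.add_one_le_exp v]
      _ ≤ 1 - v / 2 := by
        rw [div_le_iff₀ (by positivity)]
        nlinarith
  rw [norm_saddleIntegrand]
  gcongr
  calc a / (Real.pi ^ 2 * w) = a * (v / 2) := by rw [hv]; field_simp
    _ ≤ _ := by
      gcongr
      nlinarith [Real.cos_le_one (w * Real.sin θ), Real.exp_pos (-(w * (1 - Real.cos θ)))]

theorem tendsto_width_div_std {x : ℝ} (hx : 0 < x) :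
    Tendsto (fun w : ℝ => w / √(x * Real.exp w * w * (w + 1))) atTop (𝓝 0) := by
  have hlim : Tendsto (fun w : ℝ => √(Real.exp (-w) / x)) atTop (𝓝 0) := by
    have := (Real.tendsto_exp_neg_atTop_nhds_zero.div_const x).sqrt
    simpa using this
  refine squeeze_zero' ?_ ?_ hlim
  · filter_upwards [eventually_ge_atTop 1] with w hw
    positivity
  · filter_upwards [eventually_ge_atTop 1] with w hw
    have hw0 : 0 < w := by linarith
    refine Real.le_sqrt_of_sq_le ?_
    rw [div_pow, Real.sq_sqrt (by positivity), Real.exp_neg, div_le_div_iff₀ (by positivity) hx]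
    have : (Real.exp w)⁻¹ * (x * Real.exp w * w * (w + 1)) = x * w * (w + 1) := by
      field_simp
    rw [this]
    nlinarith [mul_pos hx hw0]

theorem tendsto_std_mul_exp_neg {x : ℝ} (hx : 0 < x) :
    Tendsto (fun w : ℝ => √(x * Real.exp w * w * (w + 1)) *
      Real.exp (-(x * Real.exp w / (Real.pi ^ 2 * w)))) atTop (𝓝 0) := by
  set c : ℝ := x / (6 * Real.pi ^ 2) with hc
  have hc0 : 0 < c := by positivity
  have hbot : Tendsto (fun w : ℝ => w * (3 / 2 - c * w)) atTop atBot := by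
    refine tendsto_id.atTop_mul_atBot₀ ?_
    exact tendsto_atBot_add_const_left _ (3 / 2)
      (tendsto_neg_atTop_atBot.comp (tendsto_id.const_mul_atTop hc0))
  have hlim : Tendsto (fun w : ℝ => √x * Real.exp (w * (3 / 2 - c * w))) atTop (𝓝 0) := by
    simpa using (Real.tendsto_exp_atBot.comp hbot).const_mul √x
  refine squeeze_zero' (Eventually.of_forall fun w => by positivity) ?_ hlim
  filter_upwards [eventually_ge_atTop 1] with w hw
  have hw0 : 0 < w := by linarith
  have h1 : √(x * Real.exp w * w * (w + 1)) ≤ √x * Real.exp (3 / 2 * w) := by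
    refine Real.sqrt_le_iff.2 ⟨by positivity, ?_⟩
    have hw1 := Real.add_one_le_exp w
    calc x * Real.exp w * w * (w + 1)
        ≤ x * Real.exp w * Real.exp w * Real.exp w := by gcongr; linarith
      _ = (√x * Real.exp (3 / 2 * w)) ^ 2 := by
        rw [mul_pow, Real.sq_sqrt hx.le, ← Real.exp_nat_mul, mul_assoc, mul_assoc,
          ← Real.exp_add, ← Real.exp_add]
        congr 2
        push_cast
        ring
  have h2 : c * w ^ 2 ≤ x * Real.exp w / (Real.pi ^ 2 * w) := by
    have h3 : w ^ 3 / 6 ≤ Real.exp w := by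
      simpa [Nat.factorial] using Real.pow_div_factorial_le_exp w hw0.le 3
    calc c * w ^ 2 = x * (w ^ 3 / 6) / (Real.pi ^ 2 * w) := by rw [hc]; field_simp
      _ ≤ _ := by gcongr
  calc _ ≤ (√x * Real.exp (3 / 2 * w)) * Real.exp (-(c * w ^ 2)) := by gcongr
    _ = _ := by rw [mul_assoc, ← Real.exp_add]; congr 2; ring

theorem tendsto_saddleIntegrand_rescaled {x : ℝ} (hx : 0 < x) (t : ℝ) :
    Tendsto (fun w : ℝ => saddleIntegrand (x * Real.exp w) w
      (t / √(x * Real.exp w * w * (w + 1)))) atTop (𝓝 (Real.exp (-(1 / 2) * t ^ 2) : ℝ)) := by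
  rw [Complex.ofReal_exp]
  refine (Complex.continuous_exp.tendsto _).comp ?_
  rw [tendsto_iff_norm_sub_tendsto_zero]
  have hε := tendsto_width_div_std hx
  have hlim : Tendsto (fun w : ℝ => 3 * |t| ^ 3 * (w / √(x * Real.exp w * w * (w + 1)))) atTop
      (𝓝 0) := by
    simpa using hε.const_mul (3 * |t| ^ 3)
  have hsmall : ∀ᶠ w : ℝ in atTop, w / √(x * Real.exp w * w * (w + 1)) * |t| < 1 := by
    have := hε.mul_const |t|
    rw [zero_mul] at this
    exact this.eventually_lt_const one_pos
  refine squeeze_zero' (Eventually.of_forall fun w => norm_nonneg _) ?_ hlim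
  filter_upwards [eventually_ge_atTop 1, hsmall] with w hw hwt
  have hw0 : 0 < w := by linarith
  set a := x * Real.exp w with ha
  have ha0 : 0 < a := by positivity
  set σ := √(a * w * (w + 1)) with hσ
  have hσ0 : 0 < σ := by positivity
  have hσ2 : σ ^ 2 = a * w * (w + 1) := Real.sq_sqrt (by positivity)
  have habs : w * |t / σ| = w / σ * |t| := by
    rw [abs_div, abs_of_pos hσ0]; ring
  have h := norm_saddle_exponent_add_le ha0.le hw (habs.trans_le hwt.le)
  have hsq : -(a * w * (w + 1) * (t / σ) ^ 2 / 2) = -(1 / 2) * t ^ 2 := by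
    rw [div_pow, hσ2]
    field_simp
  rw [hsq] at h
  refine h.trans ?_
  rw [habs]
  have : a * (w / σ) ^ 2 ≤ 1 := by
    rw [div_pow, hσ2, mul_div_assoc', div_le_one (by positivity)]
    nlinarith [mul_pos ha0 hw0]
  calc 3 * a * (w / σ * |t|) ^ 3 = 3 * |t| ^ 3 * ((a * (w / σ) ^ 2) * (w / σ)) := by ring
    _ ≤ 3 * |t| ^ 3 * (1 * (w / σ)) := by gcongr
    _ = _ := by rw [one_mul]

theorem tendsto_integral_near_saddle {x : ℝ} (hx : 0 < x) :
    Tendsto (fun w : ℝ => (√(x * Real.exp w * w * (w + 1)) : ℂ) *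
      ∫ θ in -(1 / w)..1 / w, saddleIntegrand (x * Real.exp w) w θ) atTop
      (𝓝 (√(2 * Real.pi) : ℝ)) := by
  set σ : ℝ → ℝ := fun w => √(x * Real.exp w * w * (w + 1)) with hσ
  set F : ℝ → ℝ → ℂ := fun w => (Ioc (-(σ w / w)) (σ w / w)).indicator
    fun t => saddleIntegrand (x * Real.exp w) w (t / σ w) with hF
  have hσpos : ∀ w : ℝ, 1 ≤ w → 0 < σ w := fun w hw => by
    have : 0 < w := by linarith
    simp only [hσ]
    positivity
  have hlim : Tendsto (fun w => ∫ t, F w t) atTop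
      (𝓝 (∫ t : ℝ, ((Real.exp (-(1 / 2) * t ^ 2) : ℝ) : ℂ))) := by
    refine tendsto_integral_filter_of_dominated_convergence
      (fun t => Real.exp (-(4 / Real.pi ^ 4) * t ^ 2)) ?_ ?_
      (integrable_exp_neg_mul_sq (by positivity)) ?_
    · refine Eventually.of_forall fun w => ?_
      refine (Continuous.aestronglyMeasurable ?_).indicator measurableSet_Ioc
      exact (continuous_saddleIntegrand _ _).comp (continuous_id.div_const _)
    · filter_upwards [eventually_ge_atTop 1] with w hw
      refine Eventually.of_forall fun t => ?_
      have hw0 : 0 < w := by linarith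
      by_cases ht : t ∈ Ioc (-(σ w / w)) (σ w / w)
      · rw [hF]
        simp only [indicator_of_mem ht]
        have habs : |t| ≤ σ w / w := abs_le.2 ⟨ht.1.le, ht.2⟩
        have hwt : w * |t / σ w| ≤ 1 := by
          rw [abs_div, abs_of_pos (hσpos w hw), mul_div_assoc', div_le_one (hσpos w hw)]
          rw [le_div_iff₀ hw0] at habs
          linarith
        refine (norm_saddleIntegrand_le_of_near (by positivity) hw hwt).trans_eq ?_
        have hσ2 : σ w ^ 2 = x * Real.exp w * w * (w + 1) := Real.sq_sqrt (by positivity)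
        rw [← hσ2, div_pow, mul_div_cancel₀ _ (pow_pos (hσpos w hw) 2).ne']
      · rw [hF]
        simp only [indicator_of_notMem ht, norm_zero]
        positivity
    · refine Eventually.of_forall fun t => ?_
      refine (tendsto_saddleIntegrand_rescaled hx t).congr' ?_
      have hsmall : ∀ᶠ w : ℝ in atTop, w / σ w * |t| < 1 := by
        have := (tendsto_width_div_std hx).mul_const |t|
        rw [zero_mul] at this
        exact this.eventually_lt_const one_pos
      filter_upwards [eventually_ge_atTop 1, hsmall] with w hw hwt
      have hw0 : 0 < w := by linarith
      have habs : |t| < σ w / w := by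
        rw [lt_div_iff₀ hw0]
        rw [div_mul_eq_mul_div, div_lt_one (hσpos w hw)] at hwt
        linarith
      have ht : t ∈ Ioc (-(σ w / w)) (σ w / w) := ⟨(abs_lt.1 habs).1, (abs_lt.1 habs).2.le⟩
      simp only [hF, indicator_of_mem ht]
      rfl
  have hgauss : (∫ t : ℝ, ((Real.exp (-(1 / 2) * t ^ 2) : ℝ) : ℂ)) = (√(2 * Real.pi) : ℝ) := by
    rw [integral_complex_ofReal, integral_gaussian]
    congr 2
    ring
  rw [hgauss] at hlim
  refine hlim.congr' ?_
  filter_upwards [eventually_ge_atTop 1] with w hw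
  have hw0 : 0 < w := by linarith
  have hσw := hσpos w hw
  have hle : -(σ w / w) ≤ σ w / w := neg_le_self (by positivity)
  rw [hF, integral_indicator measurableSet_Ioc, ← intervalIntegral.integral_of_le hle,
    intervalIntegral.integral_comp_div _ hσw.ne', Complex.real_smul, neg_div, div_right_comm,
    div_self hσw.ne']

theorem tendsto_integral_saddle {x : ℝ} (hx : 0 < x) :
    Tendsto (fun w : ℝ => (√(x * Real.exp w * w * (w + 1)) : ℂ) *
      ∫ θ in -Real.pi..Real.pi, saddleIntegrand (x * Real.exp w) w θ) atTop
      (𝓝 (√(2 * Real.pi) : ℝ)) := by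
  rw [← add_zero ((√(2 * Real.pi) : ℝ) : ℂ)]
  have hdiff : Tendsto (fun w : ℝ => (√(x * Real.exp w * w * (w + 1)) : ℂ) *
      ((∫ θ in -Real.pi..-(1 / w), saddleIntegrand (x * Real.exp w) w θ) +
        ∫ θ in 1 / w..Real.pi, saddleIntegrand (x * Real.exp w) w θ)) atTop (𝓝 0) := by
    have hlim := (tendsto_std_mul_exp_neg hx).mul_const (2 * Real.pi)
    rw [zero_mul] at hlim
    refine squeeze_zero_norm' ?_ hlim
    filter_upwards [eventually_ge_atTop 1] with w hw
    have hw0 : 0 < w := by linarith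
    have hpi := Real.pi_gt_three
    have hw1 : 1 / w ≤ 1 := by rw [div_le_one hw0]; exact hw
    have hwpos : 0 < 1 / w := by positivity
    set b := Real.exp (-(x * Real.exp w / (Real.pi ^ 2 * w))) with hb
    have hb0 : 0 < b := Real.exp_pos _
    have h1 : ‖∫ θ in -Real.pi..-(1 / w), saddleIntegrand (x * Real.exp w) w θ‖ ≤ b * Real.pi := by
      refine (intervalIntegral.norm_integral_le_of_norm_le_const (C := b) fun θ hθ => ?_).trans ?_
      · rw [uIoc_of_le (by linarith)] at hθ
        have : |θ| = -θ := abs_of_nonpos (by linarith [hθ.2])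
        exact norm_saddleIntegrand_le_of_far (by positivity) hw (by linarith [hθ.2])
          (by linarith [hθ.1])
      · gcongr
        rw [abs_of_nonneg] <;> linarith
    have h2 : ‖∫ θ in 1 / w..Real.pi, saddleIntegrand (x * Real.exp w) w θ‖ ≤ b * Real.pi := by
      refine (intervalIntegral.norm_integral_le_of_norm_le_const (C := b) fun θ hθ => ?_).trans ?_
      · rw [uIoc_of_le (by linarith)] at hθ
        have : |θ| = θ := abs_of_nonneg (by linarith [hθ.1])
        exact norm_saddleIntegrand_le_of_far (by positivity) hw (by linarith [hθ.1])
          (by linarith [hθ.2])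
      · gcongr
        rw [abs_of_nonneg] <;> linarith
    rw [norm_mul, Complex.norm_real, Real.norm_of_nonneg (Real.sqrt_nonneg _),
      mul_assoc _ b]
    refine mul_le_mul_of_nonneg_left ?_ (Real.sqrt_nonneg _)
    refine (norm_add_le _ _).trans ?_
    linarith
  refine ((tendsto_integral_near_saddle hx).add hdiff).congr fun w => ?_
  have hi : ∀ p q : ℝ, IntervalIntegrable (saddleIntegrand (x * Real.exp w) w) volume p q :=
    fun p q => (continuous_saddleIntegrand _ _).intervalIntegrable p q
  rw [← mul_add, ← intervalIntegral.integral_add_adjacent_intervals (hi (-Real.pi) (-(1 / w)))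
    (hi _ Real.pi), ← intervalIntegral.integral_add_adjacent_intervals (hi (-(1 / w)) (1 / w))
    (hi _ Real.pi)]
  ring

end BellSaddlePoint

/-- For fixed `x > 0`, with `wₙ = LW₀(n/x)`,
`Bₙ(x) ~ exp(n/wₙ + n·ln(n/wₙ) − (x+n))·(wₙ+1)^{−1/2}` as `n → ∞`; that is,
`Bₙ(x)·exp(x + n − n/wₙ)·(wₙ/n)ⁿ·√(wₙ+1) → 1`. -/
theorem bell_asymptotics (x : ℝ) (hx : 0 < x) :
    Filter.Tendsto (fun n : ℕ =>
        (Bell n).eval x * Real.exp (x + n - n / LW0 (n / x)) *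
          (LW0 (n / x) / n) ^ n * Real.sqrt (LW0 (n / x) + 1))
      Filter.atTop (nhds 1) := by
  have hW : Filter.Tendsto (fun n : ℕ => LW0 (n / x)) Filter.atTop Filter.atTop :=
    tendsto_LW0_atTop.comp (tendsto_natCast_atTop_atTop.atTop_div_const hx)
  have hint := (Complex.continuous_re.tendsto _).comp ((tendsto_integral_saddle hx).comp hW)
  have hmain := (Stirling.tendsto_stirlingSeq_sqrt_pi.mul hint).div_const
    (√2 * Real.pi)
  rw [Complex.ofReal_re, Real.sqrt_mul zero_le_two, mul_left_comm,
    Real.mul_self_sqrt Real.pi_pos.le, div_self (by positivity)] at hmain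
  refine hmain.congr' ?_
  filter_upwards [hW.eventually_gt_atTop 0, Filter.eventually_gt_atTop 0] with n hw hn
  obtain ⟨-, hwz⟩ := LW0_nonneg_and_mul_exp (z := n / x) (by positivity)
  simp only [Function.comp_apply, Complex.re_ofReal_mul]
  set w := LW0 (n / x)
  have hn0 : (0 : ℝ) < n := by exact_mod_cast hn
  have hxw : x * Real.exp w * w = n := by
    rw [eq_div_iff hx.ne'] at hwz
    linarith
  have hnw : n / w = x * Real.exp w := by rw [← hxw]; field_simp
  have hexp : Real.exp (x * Real.exp w - x) * Real.exp (x + n - x * Real.exp w) =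
      Real.exp 1 ^ n := by
    rw [← Real.exp_add, ← Real.exp_nat_mul]
    congr 1
    ring
  rw [hnw, Bell_eval_eq_integral hw hxw, hxw, Real.sqrt_mul hn0.le, Stirling.stirlingSeq]
  set J := (∫ θ in -Real.pi..Real.pi, saddleIntegrand (x * Real.exp w) w θ).re
  calc _ = n.factorial * Real.exp 1 ^ n / n ^ n * (√(w + 1) * J / Real.pi) *
        (√n / (√2 * √(2 * n : ℝ))) := by rw [div_pow]; field_simp
    _ = n.factorial * Real.exp 1 ^ n / n ^ n * (√(w + 1) * J / Real.pi) * (1 / 2) := by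
      congr 1
      rw [Real.sqrt_mul zero_le_two]
      field_simp
      rw [Real.sq_sqrt zero_le_two]
    _ = _ := by
      rw [← hexp, div_pow]
      field_simp
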